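/- Let P be a finite graded simplicial poset of rank n with positive h-vector, let P̂ be P with a top element adjoined, and let P̂* be its dual poset. Then the roots of the Chow polynomial H_{P̂*}(x) interlace the roots of the augmented Chow polynomial H^aug_{P̂}(x), i.e. H_{P̂*} ⪯ H^aug_{P̂}. -/

import Mathlib

open Polynomial

noncomputable section

/-- A real polynomial is *real-rooted* if all of its complex roots are real.
(The zero polynomial is real-rooted by convention.) -/
def RealRooted (f : Polynomial ℝ) : Prop :=
  ∀ z ∈ (f.map (algebraMap ℝ ℂ)).roots, z.im = 0

/-- All coefficients of the polynomial are nonnegative. -/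
def NonnegCoeffs (f : Polynomial ℝ) : Prop := ∀ i, 0 ≤ f.coeff i

/-- The list of real roots of `f`, with multiplicity, in weakly decreasing order. -/
def descRoots (f : Polynomial ℝ) : List ℝ := (f.roots.sort (· ≤ ·)).reverse

/-- The interlacing condition on the weakly decreasing root sequences
`α` of `f` and `β` of `g` : `β₁ ≥ α₁ ≥ β₂ ≥ α₂ ≥ …`, together with the
degree condition `deg g ∈ {deg f, deg f + 1}`. -/
def InterlacesAux (f g : Polynomial ℝ) : Prop :=
  (g.natDegree = f.natDegree ∨ g.natDegree = f.natDegree + 1) ∧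
  (∀ (i : ℕ) (hf : i < (descRoots f).length) (hg : i < (descRoots g).length),
      (descRoots f).get ⟨i, hf⟩ ≤ (descRoots g).get ⟨i, hg⟩) ∧
  (∀ (i : ℕ) (hf : i < (descRoots f).length) (hg : i + 1 < (descRoots g).length),
      (descRoots g).get ⟨i + 1, hg⟩ ≤ (descRoots f).get ⟨i, hf⟩)

/-- `f ⪯ g` : `f` interlaces `g`.  Both polynomials are required to be real-rooted;
by convention `0 ⪯ 0`, `0 ⪯ f`, `f ⪯ 0`, and any two polynomials of degree at most 1
interlace. -/
def Interlaces (f g : Polynomial ℝ) : Prop :=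
  RealRooted f ∧ RealRooted g ∧
  (f = 0 ∨ g = 0 ∨ (f.natDegree ≤ 1 ∧ g.natDegree ≤ 1) ∨ InterlacesAux f g)

/-- A finite family of real-rooted polynomials is an interlacing sequence if
`F i ⪯ F j` for all `i < j`. -/
def InterlacingSeq {n : ℕ} (F : Fin n → Polynomial ℝ) : Prop :=
  ∀ i j : Fin n, i < j → Interlaces (F i) (F j)

/-- A polynomial of degree `d` is palindromic if `coeff i = coeff (d - i)` for all `i ≤ d`. -/
def Palindromic (f : Polynomial ℝ) : Prop :=
  ∀ i ≤ f.natDegree, f.coeff i = f.coeff (f.natDegree - i)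

/-- A set `S ⊆ ℕ` is isolated if `i ∈ S` implies `i + 1 ∉ S`. -/
def IsolatedSet (S : Finset ℕ) : Prop := ∀ i ∈ S, i + 1 ∉ S

instance : DecidablePred IsolatedSet := fun S =>
  decidable_of_iff (∀ i ∈ S, i + 1 ∉ S) Iff.rfl

/-- The descent set of a permutation `w` of `{1, …, n+1}` (encoded as a permutation of
`Fin (n+1)`), as a subset of `{1, …, n}` : `Des(w) = {i ∈ {1,…,n} : w(i) > w(i+1)}`. -/
def desSet {n : ℕ} (w : Equiv.Perm (Fin (n + 1))) : Finset ℕ :=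
  (Finset.univ.filter (fun i : Fin n => w i.succ < w i.castSucc)).image
    (fun i => i.val + 1)

/-- The polynomial `p_{n,k}^{S ⊆ T}(x) = Σ x^{des(w)}`, the sum over all permutations `w`
of `{1, …, n+1}` with `w(1) = k + 1`, `Des(w)` isolated and `S ⊆ Des(w) ⊆ T`. -/
def pPoly (n k : ℕ) (S T : Finset ℕ) : Polynomial ℝ :=
  ∑ w ∈ Finset.univ.filter (fun w : Equiv.Perm (Fin (n + 1)) =>
      (w 0 : ℕ) = k ∧ IsolatedSet (desSet w) ∧ S ⊆ desSet w ∧ desSet w ⊆ T),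
    Polynomial.X ^ (desSet w).card

/-- The shifted set `S - 1 = {i - 1 : i ∈ S} ∩ {1, …, n-1}`. -/
def shiftDown (n : ℕ) (S : Finset ℕ) : Finset ℕ :=
  (S.image (fun i => i - 1)) ∩ Finset.Icc 1 (n - 1)

section Poset

variable (P : Type*) [Fintype P] [PartialOrder P] [OrderBot P]

/-- A finite poset `P` with a minimum is simplicial of rank `n` if for every maximal
element `m` the interval `[⊥, m]` is order-isomorphic to the boolean lattice of
subsets of an `n`-element set. -/
def SimplicialOfRank (n : ℕ) : Prop :=
  ∀ m : P, IsMax m → Nonempty ((Set.Icc (⊥ : P) m) ≃o Finset (Fin n))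

variable {P}

/-- `rk` is a rank function: `rk ⊥ = 0` and ranks increase by one along covers. -/
def IsRankFunction (rk : P → ℕ) : Prop :=
  rk ⊥ = 0 ∧ ∀ a b : P, a ⋖ b → rk b = rk a + 1

/-- `f_{i-1}` : the number of elements of `P` of rank `i`. -/
def fvec (rk : P → ℕ) (i : ℕ) : ℕ := (Finset.univ.filter (fun x => rk x = i)).card

/-- The generating polynomial `Σ_{i=0}^n h_i x^i = Σ_{i=0}^n f_{i-1} x^i (1-x)^{n-i}`
of the h-vector of `P`. -/
def hPoly (rk : P → ℕ) (n : ℕ) : Polynomial ℤ :=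
  ∑ i ∈ Finset.range (n + 1),
    Polynomial.C (fvec rk i : ℤ) * Polynomial.X ^ i * (1 - Polynomial.X) ^ (n - i)

/-- The h-vector entry `h_k` of `P`. -/
def hvec (rk : P → ℕ) (n k : ℕ) : ℤ := (hPoly rk n).coeff k

/-- The flag f-vector `α_{P̂}(T)` : the number of chains in `P̂ ∖ {0̂, 1̂} = P ∖ {⊥}`
whose set of ranks is exactly `T`. -/
def flagF (rk : P → ℕ) (T : Finset ℕ) : ℕ :=
  Nat.card {c : Finset P // IsChain (· ≤ ·) (c : Set P) ∧ (⊥ : P) ∉ c ∧ c.image rk = T}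

/-- The flag h-vector `β_{P̂}(S) = Σ_{T ⊆ S} (-1)^{|S ∖ T|} α_{P̂}(T)`. -/
def flagH (rk : P → ℕ) (S : Finset ℕ) : ℤ :=
  ∑ T ∈ S.powerset, (-1) ^ ((S \ T).card) * (flagF rk T : ℤ)

/-- The flag h-vector of the dual poset `P̂*` : `β_{P̂*}(S) = β_{P̂}({n+1-s : s ∈ S})`. -/
def flagHDual (rk : P → ℕ) (n : ℕ) (S : Finset ℕ) : ℤ :=
  flagH rk (S.image (fun s => n + 1 - s))

/-- The Chow polynomial
`H_{P̂}(x) = Σ_{S ⊆ {2,…,n} isolated} β_{P̂}(S) x^{|S|} (1+x)^{n-2|S|}`. -/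
def chowPoly (rk : P → ℕ) (n : ℕ) : Polynomial ℝ :=
  ∑ S ∈ (Finset.Icc 2 n).powerset.filter IsolatedSet,
    (flagH rk S : ℝ) • (Polynomial.X ^ S.card * (1 + Polynomial.X) ^ (n - 2 * S.card))

/-- The augmented Chow polynomial
`H^aug_{P̂}(x) = Σ_{S ⊆ {1,…,n} isolated} β_{P̂}(S) x^{|S|} (1+x)^{n+1-2|S|}`. -/
def chowAugPoly (rk : P → ℕ) (n : ℕ) : Polynomial ℝ :=
  ∑ S ∈ (Finset.Icc 1 n).powerset.filter IsolatedSet,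
    (flagH rk S : ℝ) • (Polynomial.X ^ S.card * (1 + Polynomial.X) ^ (n + 1 - 2 * S.card))

/-- The Chow polynomial of the dual poset `P̂*`. -/
def chowDualPoly (rk : P → ℕ) (n : ℕ) : Polynomial ℝ :=
  ∑ S ∈ (Finset.Icc 2 n).powerset.filter IsolatedSet,
    (flagHDual rk n S : ℝ) • (Polynomial.X ^ S.card * (1 + Polynomial.X) ^ (n - 2 * S.card))

/-- The augmented Chow polynomial of the dual poset `P̂*`. -/
def chowAugDualPoly (rk : P → ℕ) (n : ℕ) : Polynomial ℝ :=
  ∑ S ∈ (Finset.Icc 1 n).powerset.filter IsolatedSet,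
    (flagHDual rk n S : ℝ) • (Polynomial.X ^ S.card * (1 + Polynomial.X) ^ (n + 1 - 2 * S.card))

end Poset

end

/-!
Fix `x` in the upper half plane and put `t = x / (1 + x) ^ 2`, which avoids `(-∞, 0]`. Up to powers
of `1 + x`, both Chow polynomials become generating functions in `t` of flag `h`-numbers over
isolated sets. Over a simplicial poset these numbers are combinations of universal ones, the
coefficients being the nonnegative entries of the `h`-vector, and conditioning on whether the
largest admissible rank lies in the isolated set gives a recursion for the universal generating
functions.

Interlacing is replaced by a relation between complex numbers: `v * conj u` lies in the convex cone
generated by `1` and `t`. This relation is additive in both arguments and passes from `(u, v)` to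
`(v, t * u)`, so the recursion preserves it, and for the values `f x` and `g x` of the two Chow
polynomials it yields `0 < im (g x * conj (f x))` on the whole upper half plane. Hence `f` and `g`
have no zeros there, so all their roots are real, and following the argument of `g * conj f` along
a segment that leaves the real axis at `c` shows that `g` has as many roots above `c` as `f`, or
one more, which is interlacing.
-/

section ConeRelation

/-- The trace at a point of the interlacing relation between two values `u` and `v`: the number
`v * conj u` lies in the convex cone generated by `1` and `t`. -/
def ConeInterlaces (t u v : ℂ) : Prop :=
  v * starRingEnd ℂ u ∈ PointedCone.hull ℝ {1, t}

namespace ConeInterlaces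

variable {t u v u' v' : ℂ}

lemma iff_exists :
    ConeInterlaces t u v ↔
      ∃ α β : ℝ, 0 ≤ α ∧ 0 ≤ β ∧ v * starRingEnd ℂ u = α + β * t := by
  simp only [ConeInterlaces, PointedCone.hull, Submodule.mem_span_pair]
  constructor
  · rintro ⟨⟨α, hα⟩, ⟨β, hβ⟩, h⟩
    exact ⟨α, β, hα, hβ, by simpa [Nonneg.mk_smul] using h.symm⟩
  · rintro ⟨α, β, hα, hβ, h⟩
    exact ⟨⟨α, hα⟩, ⟨β, hβ⟩, by simp [Nonneg.mk_smul, h]⟩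

lemma refl (t u : ℂ) : ConeInterlaces t u u :=
  iff_exists.mpr ⟨Complex.normSq u, 0, Complex.normSq_nonneg u, le_rfl, by simp [Complex.mul_conj]⟩

lemma add_left (h : ConeInterlaces t u v) (h' : ConeInterlaces t u' v) :
    ConeInterlaces t (u + u') v := by
  simpa only [ConeInterlaces, map_add, mul_add] using add_mem h h'

lemma add_right (h : ConeInterlaces t u v) (h' : ConeInterlaces t u v') :
    ConeInterlaces t u (v + v') := by
  simpa only [ConeInterlaces, add_mul] using add_mem h h'

lemma mul_left {r : ℝ} (hr : 0 ≤ r) (h : ConeInterlaces t u v) : ConeInterlaces t (r * u) v := by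
  simpa [ConeInterlaces, mul_left_comm] using PointedCone.smul_mem _ hr h

lemma mul_right {r : ℝ} (hr : 0 ≤ r) (h : ConeInterlaces t u v) : ConeInterlaces t u (r * v) := by
  simpa [ConeInterlaces, mul_assoc] using PointedCone.smul_mem _ hr h

lemma sum_sum {ι κ : Type*} {s : Finset ι} {s' : Finset κ} {f : ι → ℂ} {g : κ → ℂ}
    (h : ∀ i ∈ s, ∀ j ∈ s', ConeInterlaces t (f i) (g j)) :
    ConeInterlaces t (∑ i ∈ s, f i) (∑ j ∈ s', g j) := by
  rw [ConeInterlaces, map_sum, Finset.sum_mul_sum]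
  exact sum_mem fun j hj => sum_mem fun i hi => h i hi j hj

lemma sum_right {ι : Type*} {s : Finset ι} {f : ι → ℂ}
    (h : ∀ i ∈ s, ConeInterlaces t u (f i)) : ConeInterlaces t u (∑ i ∈ s, f i) := by
  rw [ConeInterlaces, Finset.sum_mul]
  exact sum_mem h

-- If `v * conj u = α + β * t`, then `t * u * conj v = β * |t|² + α * t`.
lemma rotate (h : ConeInterlaces t u v) : ConeInterlaces t v (t * u) := by
  obtain ⟨α, β, hα, hβ, h⟩ := iff_exists.mp h
  refine iff_exists.mpr ⟨β * Complex.normSq t, α, mul_nonneg hβ (Complex.normSq_nonneg t), hα, ?_⟩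
  have h_conj : u * starRingEnd ℂ v = α + β * starRingEnd ℂ t := by
    simpa [mul_comm] using congrArg (starRingEnd ℂ) h
  rw [mul_assoc, h_conj, Complex.ofReal_mul, ← Complex.mul_conj]
  ring

lemma mul_both (h : ConeInterlaces t u v) : ConeInterlaces t (t * u) (t * v) :=
  h.rotate.rotate

-- Otherwise `-|u|²` would be in the cone, which for `t` off the negative axis meets the reals
-- only in `[0, ∞)`.
lemma add_ne_zero (ht : t ∈ Complex.slitPlane) (hu : u ≠ 0) (h : ConeInterlaces t u v) :
    u + v ≠ 0 := by
  intro h_sum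
  obtain ⟨α, β, hα, hβ, h⟩ := iff_exists.mp h
  rw [eq_neg_of_add_eq_zero_right h_sum, neg_mul, Complex.mul_conj] at h
  have h_pos : 0 < Complex.normSq u := Complex.normSq_pos.mpr hu
  have h_re : -Complex.normSq u = α + β * t.re := by simpa using congrArg Complex.re h
  have h_im : β = 0 ∨ t.im = 0 := by simpa using congrArg Complex.im h
  rcases h_im with rfl | h_im
  · linarith
  · have h_t : 0 < t.re := (Complex.mem_slitPlane_iff.mp ht).resolve_right (not_not.mpr h_im)
    nlinarith [mul_nonneg hβ h_t.le]

end ConeInterlaces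

end ConeRelation

section Rows

/-- The invariant carried by the rows `a`, `b` (indexed by `0, …, n`) of the values at `t` of the
refined generating functions; in the application `b k - a k` collects the isolated sets
containing the largest admissible element. -/
structure InterlacingRow (t : ℂ) (n : ℕ) (a b : ℕ → ℂ) : Prop where
  a_a : ∀ i j, i < j → j ≤ n → ConeInterlaces t (a i) (a j)
  a_sub : ∀ i j, i ≤ n → j ≤ n → ConeInterlaces t (a i) (b j - a j)
  b_b : ∀ i j, i < j → j ≤ n → ConeInterlaces t (b i) (b j)
  a_zero_ne : a 0 ≠ 0
  b_zero : b 0 = a 0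

namespace InterlacingRow

open Finset

variable {t : ℂ} {n : ℕ} {a b a' b' : ℕ → ℂ} {i j k l : ℕ}

lemma a_b (h : InterlacingRow t n a b) (hij : i < j) (hj : j ≤ n) :
    ConeInterlaces t (a i) (b j) := by
  simpa using (h.a_a i j hij hj).add_right (h.a_sub i j (by omega) hj)

lemma sum_a_sum_a (h : InterlacingRow t n a b) (hl : l ≤ n + 1) :
    ConeInterlaces t (∑ m ∈ Ico i j, a m) (∑ m ∈ Ico j l, a m) := by
  refine ConeInterlaces.sum_sum fun p hp q hq => h.a_a p q ?_ ?_ <;>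
  · simp only [mem_Ico] at hp hq
    omega

lemma sum_a_sum_b (h : InterlacingRow t n a b) (hjk : j ≤ k) (hl : l ≤ n + 1) :
    ConeInterlaces t (∑ m ∈ Ico i j, a m) (∑ m ∈ Ico k l, b m) := by
  refine ConeInterlaces.sum_sum fun p hp q hq => h.a_b ?_ ?_ <;>
  · simp only [mem_Ico] at hp hq
    omega

lemma sum_b_sum_b (h : InterlacingRow t n a b) (hl : l ≤ n + 1) :
    ConeInterlaces t (∑ m ∈ Ico i j, b m) (∑ m ∈ Ico j l, b m) := by
  refine ConeInterlaces.sum_sum fun p hp q hq => h.b_b p q ?_ ?_ <;>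
  · simp only [mem_Ico] at hp hq
    omega

lemma sum_a_sum_b_same (h : InterlacingRow t n a b) (hj : j ≤ n + 1) :
    ConeInterlaces t (∑ m ∈ Ico i j, a m) (∑ m ∈ Ico i j, b m) := by
  have h_sub : ConeInterlaces t (∑ m ∈ Ico i j, a m) (∑ m ∈ Ico i j, (b m - a m)) := by
    refine ConeInterlaces.sum_sum fun p hp q hq => h.a_sub p q ?_ ?_ <;>
    · simp only [mem_Ico] at hp hq
      omega
  simpa using (ConeInterlaces.refl t _).add_right h_sub

lemma sum_initial_a_sum_final_b (h : InterlacingRow t n a b) (hk : k ≤ n + 1) :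
    ConeInterlaces t (∑ m ∈ Ico 0 k, a m) (∑ m ∈ Ico i (n + 1), b m) := by
  rcases le_or_gt k i with hki | hik
  · exact h.sum_a_sum_b hki le_rfl
  · have h_low : ConeInterlaces t (∑ m ∈ Ico 0 i, a m) (∑ m ∈ Ico i (n + 1), b m) :=
      h.sum_a_sum_b le_rfl le_rfl
    have h_overlap : ConeInterlaces t (∑ m ∈ Ico i k, a m) (∑ m ∈ Ico i (n + 1), b m) := by
      rw [← sum_Ico_consecutive _ hik.le hk]
      exact (h.sum_a_sum_b_same hk).add_right (h.sum_a_sum_b le_rfl le_rfl)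
    rw [← sum_Ico_consecutive _ (Nat.zero_le i) hik.le]
    exact h_low.add_left h_overlap

lemma next_a_a (h : InterlacingRow t n a b) (hij : i < j) (hj : j ≤ n + 1) :
    ConeInterlaces t (∑ m ∈ Ico i (n + 1), b m) (∑ m ∈ Ico j (n + 1), b m) := by
  rw [← sum_Ico_consecutive _ hij.le hj]
  exact (h.sum_b_sum_b le_rfl).add_left (ConeInterlaces.refl _ _)

lemma next_b_b (h : InterlacingRow t n a b) (hij : i < j) (hj : j ≤ n + 1) :
    ConeInterlaces t (∑ m ∈ Ico i (n + 1), b m + t * ∑ m ∈ Ico 0 i, a m)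
      (∑ m ∈ Ico j (n + 1), b m + t * ∑ m ∈ Ico 0 j, a m) := by
  set u := ∑ m ∈ Ico j (n + 1), b m
  set v := ∑ m ∈ Ico i j, b m
  set w := ∑ m ∈ Ico 0 i, a m
  set z := ∑ m ∈ Ico i j, a m
  have h_left : ∑ m ∈ Ico i (n + 1), b m + t * w = (u + t * w) + v := by
    rw [← sum_Ico_consecutive _ hij.le hj]
    ring
  have h_right : u + t * ∑ m ∈ Ico 0 j, a m = (u + t * w) + t * z := by
    rw [← sum_Ico_consecutive _ (Nat.zero_le i) hij.le]
    ring
  rw [h_left, h_right]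
  have hzu : ConeInterlaces t z u := h.sum_a_sum_b le_rfl le_rfl
  have hwz : ConeInterlaces t w z := h.sum_a_sum_a hj
  have hvu : ConeInterlaces t v u := h.sum_b_sum_b le_rfl
  have hwv : ConeInterlaces t w v := h.sum_a_sum_b le_rfl hj
  have hzv : ConeInterlaces t z v := h.sum_a_sum_b_same hj
  have h_common : ConeInterlaces t (u + t * w) ((u + t * w) + t * z) :=
    (ConeInterlaces.refl _ _).add_right (hzu.rotate.add_left hwz.mul_both)
  have h_rest : ConeInterlaces t v ((u + t * w) + t * z) :=
    (hvu.add_right hwv.rotate).add_right hzv.rotate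
  exact h_common.add_left h_rest

lemma sum_b_ne_zero (ht : t ∈ Complex.slitPlane) (h : InterlacingRow t n a b) :
    ∑ m ∈ Ico 0 (n + 1), b m ≠ 0 := by
  rw [sum_eq_sum_Ico_succ_bot (by omega)]
  refine ConeInterlaces.add_ne_zero ht (h.b_zero ▸ h.a_zero_ne)
    (ConeInterlaces.sum_right fun m hm => h.b_b 0 m ?_ ?_) <;>
  · simp only [mem_Ico] at hm
    omega

lemma zero (ha : a 0 ≠ 0) (hb : b 0 = a 0) : InterlacingRow t 0 a b where
  a_a := by omega
  a_sub i j _ hj := by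
    obtain rfl : j = 0 := by omega
    simp [ConeInterlaces, hb]
  b_b := by omega
  a_zero_ne := ha
  b_zero := hb

lemma succ (ht : t ∈ Complex.slitPlane) (h : InterlacingRow t n a b)
    (ha : ∀ k, a' k = ∑ m ∈ Ico k (n + 1), b m)
    (hb : ∀ k ≤ n + 1, b' k = a' k + t * ∑ m ∈ Ico 0 k, a m) :
    InterlacingRow t (n + 1) a' b' where
  a_a i j hij hj := by
    rw [ha, ha]
    exact h.next_a_a hij hj
  a_sub i k _ hk := by
    rw [hb k hk, add_sub_cancel_left, ha]
    exact (h.sum_initial_a_sum_final_b hk).rotate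
  b_b i j hij hj := by
    rw [hb i (by omega), hb j hj, ha, ha]
    exact h.next_b_b hij hj
  a_zero_ne := by
    rw [ha]
    exact h.sum_b_ne_zero ht
  b_zero := by simp [hb 0 (Nat.zero_le _)]

section Combination

variable {w : ℕ → ℝ}

lemma combination_a_ne_zero (ht : t ∈ Complex.slitPlane) (h : InterlacingRow t n a b)
    (hw : ∀ k, 0 ≤ w k) (hw0 : 0 < w 0) : ∑ k ∈ range (n + 1), (w k : ℂ) * a k ≠ 0 := by
  rw [range_eq_Ico, sum_eq_sum_Ico_succ_bot (by omega)]
  refine ConeInterlaces.add_ne_zero ht (mul_ne_zero (by exact_mod_cast hw0.ne') h.a_zero_ne)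
    (ConeInterlaces.sum_right fun m hm => ((h.a_a 0 m ?_ ?_).mul_left (hw 0)).mul_right (hw m)) <;>
  · simp only [mem_Ico] at hm
    omega

lemma combination_a_sub (h : InterlacingRow t n a b) (hw : ∀ k, 0 ≤ w k) :
    ConeInterlaces t (∑ k ∈ range (n + 1), (w k : ℂ) * a k)
      (∑ k ∈ range (n + 1), (w k : ℂ) * (b k - a k)) :=
  ConeInterlaces.sum_sum fun i hi j hj =>
    ((h.a_sub i j (mem_range_succ_iff.mp hi) (mem_range_succ_iff.mp hj)).mul_left
      (hw i)).mul_right (hw j)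

lemma combination_b_eq (a b : ℕ → ℂ) (w : ℕ → ℝ) :
    ∑ k ∈ range (n + 1), (w k : ℂ) * b k =
      ∑ k ∈ range (n + 1), (w k : ℂ) * a k + ∑ k ∈ range (n + 1), (w k : ℂ) * (b k - a k) := by
  simp only [← sum_add_distrib, ← mul_add, add_sub_cancel]

lemma combination_a_b (h : InterlacingRow t n a b) (hw : ∀ k, 0 ≤ w k) :
    ConeInterlaces t (∑ k ∈ range (n + 1), (w k : ℂ) * a k)
      (∑ k ∈ range (n + 1), (w k : ℂ) * b k) :=
  combination_b_eq a b w ▸ (ConeInterlaces.refl t _).add_right (h.combination_a_sub hw)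

lemma combination_b_ne_zero (ht : t ∈ Complex.slitPlane) (h : InterlacingRow t n a b)
    (hw : ∀ k, 0 ≤ w k) (hw0 : 0 < w 0) : ∑ k ∈ range (n + 1), (w k : ℂ) * b k ≠ 0 :=
  combination_b_eq a b w ▸
    (h.combination_a_sub hw).add_ne_zero ht (h.combination_a_ne_zero ht hw hw0)

end Combination

end InterlacingRow

end Rows

section UpperHalfPlane

lemma one_add_ne_zero_of_im_pos {x : ℂ} (hx : 0 < x.im) : 1 + x ≠ 0 := fun h => by
  simpa [hx.ne'] using congrArg Complex.im h

lemma div_one_add_sq_mem_slitPlane {x : ℂ} (hx : 0 < x.im) :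
    x / (1 + x) ^ 2 ∈ Complex.slitPlane := by
  by_contra h_notMem
  set t := x / (1 + x) ^ 2 with ht
  obtain ⟨h_re, h_im⟩ : t.re ≤ 0 ∧ t.im = 0 := by
    simpa [Complex.mem_slitPlane_iff] using h_notMem
  have hxt : x = (t.re : ℂ) * (1 + x) ^ 2 := by
    rw [show (t.re : ℂ) = t from Complex.ext rfl h_im.symm, ht,
      div_mul_cancel₀ _ (pow_ne_zero 2 (one_add_ne_zero_of_im_pos hx))]
  have hx_re : x.re = t.re * ((1 + x.re) ^ 2 - x.im ^ 2) := by
    simpa [pow_two] using congrArg Complex.re hxt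
  have hx_im : x.im * 1 = x.im * (2 * t.re * (1 + x.re)) := by
    have h := congrArg Complex.im hxt
    rw [Complex.im_ofReal_mul] at h
    simp only [pow_two, Complex.mul_im, Complex.add_re, Complex.add_im, Complex.one_re,
      Complex.one_im] at h
    linarith
  have h_unit : 1 = 2 * t.re * (1 + x.re) := mul_left_cancel₀ hx.ne' hx_im
  have hx_re' : x.re = 1 + 2 * (-t.re * x.im ^ 2) := by
    linear_combination 2 * hx_re - (1 + x.re) * h_unit
  have : 0 ≤ -t.re * x.im ^ 2 := mul_nonneg (neg_nonneg.mpr h_re) (sq_nonneg _)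
  nlinarith

-- With `v * conj u = α + β * t`, the number in question is `|1 + x|^(2n)` times
-- `α * (1 + x) + β * x / (1 + x)`, and both `1 + x` and `x / (1 + x)` have positive imaginary part.
lemma ConeInterlaces.im_pos {x u v : ℂ} (hx : 0 < x.im) (hu : u ≠ 0) (hv : v ≠ 0)
    (h : ConeInterlaces (x / (1 + x) ^ 2) u v) (n : ℕ) :
    0 < ((1 + x) ^ (n + 1) * v * starRingEnd ℂ ((1 + x) ^ n * u)).im := by
  obtain ⟨α, β, hα, hβ, huv⟩ := ConeInterlaces.iff_exists.mp h
  have hx1 := one_add_ne_zero_of_im_pos hx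
  have h_expand : (1 + x) ^ (n + 1) * v * starRingEnd ℂ ((1 + x) ^ n * u) =
      ((Complex.normSq (1 + x) ^ n : ℝ) : ℂ) * (α * (1 + x) + β * (x / (1 + x))) := by
    calc (1 + x) ^ (n + 1) * v * starRingEnd ℂ ((1 + x) ^ n * u)
        = ((1 + x) * starRingEnd ℂ (1 + x)) ^ n * ((1 + x) * (v * starRingEnd ℂ u)) := by
          rw [map_mul, map_pow, mul_pow]
          ring
      _ = _ := by
          rw [huv, Complex.mul_conj, Complex.ofReal_pow]
          field_simp
  have h_div : x / (1 + x) = ((Complex.normSq (1 + x))⁻¹ : ℝ) * (x * (1 + starRingEnd ℂ x)) := by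
    rw [div_eq_mul_inv, Complex.inv_def, map_add, map_one]
    ring
  have h_div_im : 0 < (x / (1 + x)).im := by
    rw [h_div, Complex.im_ofReal_mul]
    refine mul_pos (inv_pos.mpr (Complex.normSq_pos.mpr hx1)) ?_
    simp only [Complex.mul_im, Complex.add_re, Complex.add_im, Complex.one_re, Complex.one_im,
      Complex.conj_re, Complex.conj_im]
    linarith
  have h_coeff : 0 < α ∨ 0 < β := by
    by_contra! h_nonpos
    have : v * starRingEnd ℂ u = 0 := by
      rw [huv, le_antisymm h_nonpos.1 hα, le_antisymm h_nonpos.2 hβ]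
      simp
    exact mul_ne_zero hv (by simpa using hu) this
  rw [h_expand, Complex.im_ofReal_mul, Complex.add_im, Complex.im_ofReal_mul, Complex.im_ofReal_mul]
  refine mul_pos (pow_pos (Complex.normSq_pos.mpr hx1) n) ?_
  have h_one_add : 0 < (1 + x).im := by simpa using hx
  rcases h_coeff with h_pos | h_pos <;> positivity

end UpperHalfPlane

section ArgumentCount

lemma continuousOn_arg_closedUpperHalfPlane :
    ContinuousOn Complex.arg {z | 0 ≤ z.im ∧ z ≠ 0} := by
  rintro z ⟨-, hz⟩
  by_cases h_slit : z ∈ Complex.slitPlane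
  · exact (Complex.continuousAt_arg h_slit).continuousWithinAt
  · obtain ⟨h_re, h_im⟩ : z.re ≤ 0 ∧ z.im = 0 := by
      simpa [Complex.mem_slitPlane_iff] using h_slit
    have h_neg : z.re < 0 := lt_of_le_of_ne h_re fun h => hz (Complex.ext h h_im)
    exact (Complex.continuousWithinAt_arg_of_re_neg_of_im_zero h_neg h_im).mono
      fun w hw => hw.1

lemma multiset_prod_eq_norm_mul_exp_arg (M : Multiset ℂ) :
    M.prod = ‖M.prod‖ * Complex.exp (((M.map Complex.arg).sum : ℝ) * Complex.I) := by
  induction M using Multiset.induction_on with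
  | empty => simp
  | cons z M ih =>
    simp only [Multiset.prod_cons, Multiset.map_cons, Multiset.sum_cons, norm_mul,
      Complex.ofReal_mul, Complex.ofReal_add, add_mul, Complex.exp_add]
    nth_rewrite 1 [ih, ← Complex.norm_mul_exp_arg_mul_I z]
    ring

lemma im_prod_mul_conj_prod (M N : Multiset ℂ) :
    (N.prod * starRingEnd ℂ M.prod).im =
      ‖N.prod‖ * ‖M.prod‖ * Real.sin ((N.map Complex.arg).sum - (M.map Complex.arg).sum) := by
  set ν := (N.map Complex.arg).sum with hν
  set μ := (M.map Complex.arg).sum with hμ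
  have h_polar : N.prod * starRingEnd ℂ M.prod =
      ((‖N.prod‖ * ‖M.prod‖ : ℝ) : ℂ) * Complex.exp ((ν - μ : ℝ) * Complex.I) := by
    conv_lhs => rw [multiset_prod_eq_norm_mul_exp_arg N, multiset_prod_eq_norm_mul_exp_arg M,
      ← hν, ← hμ]
    rw [map_mul, Complex.conj_ofReal, ← Complex.exp_conj, map_mul, Complex.conj_ofReal,
      Complex.conj_I, mul_mul_mul_comm, ← Complex.exp_add]
    push_cast
    ring_nf
  rw [h_polar, Complex.im_ofReal_mul, Complex.exp_ofReal_mul_I_im]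

/-- The sum over `α ∈ M` of the arguments of points on the segments from `c - α` (at `y = 0`) to
`I` (at `y = 1`): it connects `π` times the number of elements of `M` above `c` to `π / 2` times
the size of `M`. -/
noncomputable def argSum (c : ℝ) (M : Multiset ℝ) (y : ℝ) : ℝ :=
  (M.map fun α : ℝ => Complex.arg ((1 - y) * (c - α) + y * Complex.I)).sum

variable {c : ℝ} {M N : Multiset ℝ}

lemma argSum_zero (c : ℝ) (M : Multiset ℝ) : argSum c M 0 = Real.pi * M.countP (c < ·) := by
  induction M using Multiset.induction_on with
  | empty => simp [argSum]
  | cons α M ih =>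
    have h_cons : argSum c (α ::ₘ M) 0 = Complex.arg ((c - α : ℝ) : ℂ) + argSum c M 0 := by
      simp [argSum]
    rw [h_cons, ih, Multiset.countP_cons]
    split_ifs with h
    · rw [Complex.arg_ofReal_of_neg (sub_neg.mpr h)]
      push_cast
      ring
    · rw [Complex.arg_ofReal_of_nonneg (sub_nonneg.mpr (not_lt.mp h)), zero_add, add_zero]

lemma argSum_one (c : ℝ) (M : Multiset ℝ) : argSum c M 1 = M.card * (Real.pi / 2) := by
  simp [argSum]

lemma continuousOn_argSum (hc : c ∉ M) : ContinuousOn (argSum c M) (Set.Icc 0 1) := by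
  refine continuousOn_multiset_sum M fun α hα => ?_
  refine continuousOn_arg_closedUpperHalfPlane.comp (by fun_prop) fun y hy => ⟨?_, fun h => ?_⟩
  · simpa using hy.1
  · obtain ⟨h_re, rfl⟩ : (1 - y) * (c - α) = 0 ∧ y = 0 := by
      simpa using And.intro (congrArg Complex.re h) (congrArg Complex.im h)
    exact hc (by rwa [show c = α by linarith])

lemma argSum_eq_sum_arg {y : ℝ} (hy : y < 1) (c : ℝ) (M : Multiset ℝ) :
    argSum c M y =
      ((M.map fun α : ℝ => ((c + (y / (1 - y) : ℝ) * Complex.I - α : ℂ))).map Complex.arg).sum := by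
  rw [Multiset.map_map, argSum]
  refine congrArg Multiset.sum (Multiset.map_congr rfl fun α _ => ?_)
  have h_cancel : (1 - y : ℂ) * (y / (1 - y)) = y :=
    mul_div_cancel₀ _ (by exact_mod_cast (sub_pos.mpr hy).ne')
  rw [Function.comp_apply, ← Complex.arg_real_mul (_ - _) (sub_pos.mpr hy)]
  congr 1
  push_cast
  linear_combination -Complex.I * h_cancel

variable (h_im : ∀ z : ℂ, 0 < z.im →
  0 < ((N.map fun α : ℝ => z - α).prod * starRingEnd ℂ (M.map fun α : ℝ => z - α).prod).im)

include h_im in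
lemma sin_argSum_sub_pos {y : ℝ} (hy : y ∈ Set.Ioo 0 1) :
    0 < Real.sin (argSum c N y - argSum c M y) := by
  have h_pos := h_im (c + (y / (1 - y) : ℝ) * Complex.I)
    (by simpa [Complex.im_ofReal_mul, -Complex.ofReal_div] using div_pos hy.1 (sub_pos.mpr hy.2))
  rw [im_prod_mul_conj_prod, ← argSum_eq_sum_arg hy.2, ← argSum_eq_sum_arg hy.2] at h_pos
  exact pos_of_mul_pos_right h_pos (by positivity)

include h_im in
-- The difference of the two argument sums is `π / 2` at `y = 1`, and along the way it can meet
-- neither `0` nor `π`, where the sine vanishes. So it stays in `[0, π]`.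
lemma countP_lt_interlaces (h_card : N.card = M.card + 1) (hcM : c ∉ M) (hcN : c ∉ N) :
    M.countP (c < ·) ≤ N.countP (c < ·) ∧ N.countP (c < ·) ≤ M.countP (c < ·) + 1 := by
  set φ : ℝ → ℝ := fun y => argSum c N y - argSum c M y with hφ
  have h_cont : ContinuousOn φ (Set.Icc 0 1) :=
    (continuousOn_argSum hcN).sub (continuousOn_argSum hcM)
  have h_zero : φ 0 = Real.pi * (N.countP (c < ·) - M.countP (c < ·)) := by
    simp only [hφ, argSum_zero]
    ring
  have h_one : φ 1 = Real.pi / 2 := by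
    simp only [hφ, argSum_one, h_card]
    push_cast
    ring
  have h_sin : ∀ y ∈ Set.Ioo (0 : ℝ) 1, 0 < Real.sin (φ y) := fun y => sin_argSum_sub_pos h_im
  have h_nonneg : 0 ≤ φ 0 := by
    by_contra! h_neg
    obtain ⟨y, hy, hy_zero⟩ := intermediate_value_Ioo zero_le_one h_cont
      ⟨h_neg, h_one ▸ Real.pi_div_two_pos⟩
    simpa [hy_zero] using h_sin y hy
  have h_le_pi : φ 0 ≤ Real.pi := by
    by_contra! h_gt
    obtain ⟨y, hy, hy_pi⟩ := intermediate_value_Ioo' zero_le_one h_cont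
      ⟨h_one ▸ half_lt_self Real.pi_pos, h_gt⟩
    simpa [hy_pi] using h_sin y hy
  rw [h_zero] at h_nonneg h_le_pi
  have h_low := nonneg_of_mul_nonneg_right h_nonneg Real.pi_pos
  have h_high := (mul_le_iff_le_one_right Real.pi_pos).mp h_le_pi
  constructor
  · exact_mod_cast sub_nonneg.mp h_low
  · exact_mod_cast sub_le_iff_le_add'.mp h_high

end ArgumentCount

section Interlacing

lemma lt_getElem_iff_lt_countP {α : Type*} [LinearOrder α] {l : List α}
    (hl : l.Pairwise (· ≥ ·)) (c : α) {i : ℕ} (hi : i < l.length) :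
    c < l[i] ↔ i < l.countP (c < ·) := by
  induction l generalizing i with
  | nil => simp at hi
  | cons a l ih =>
    obtain ⟨ha, hl⟩ := List.pairwise_cons.mp hl
    by_cases hca : c < a
    · cases i with
      | zero => simp [hca]
      | succ i => simpa [hca] using ih hl (by simpa using hi)
    · have h_count : l.countP (c < ·) = 0 :=
        List.countP_eq_zero.mpr fun b hb => by simpa using (ha b hb).trans (not_lt.mp hca)
      have h_le : (a :: l)[i] ≤ a := by
        rcases List.mem_cons.mp (List.getElem_mem hi) with h | h
        · exact h.le
        · exact ha _ h
      simpa [hca, h_count] using h_le.trans (not_lt.mp hca)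

lemma descRoots_pairwise (f : ℝ[X]) : (descRoots f).Pairwise (· ≥ ·) :=
  List.pairwise_reverse.mpr (Multiset.pairwise_sort _ _)

lemma countP_descRoots (f : ℝ[X]) (p : ℝ → Prop) [DecidablePred p] :
    (descRoots f).countP p = f.roots.countP p := by
  rw [descRoots, List.countP_reverse, ← Multiset.coe_countP, Multiset.sort_eq]

lemma exists_between_notMem {x y : ℝ} (h : x < y) (M N : Multiset ℝ) :
    ∃ c, x < c ∧ c < y ∧ c ∉ M ∧ c ∉ N := by
  obtain ⟨c, hc, hc'⟩ := (Set.Ioo_infinite h).exists_notMem_finset (M + N).toFinset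
  simp only [Multiset.mem_toFinset, Multiset.mem_add, not_or] at hc'
  exact ⟨c, hc.1, hc.2, hc'⟩

lemma interlacesAux_of_countP {f g : ℝ[X]} (h_deg : g.natDegree = f.natDegree + 1)
    (h : ∀ c, c ∉ f.roots → c ∉ g.roots → f.roots.countP (c < ·) ≤ g.roots.countP (c < ·) ∧
      g.roots.countP (c < ·) ≤ f.roots.countP (c < ·) + 1) :
    InterlacesAux f g := by
  simp only [← countP_descRoots] at h
  refine ⟨Or.inr h_deg, fun i hf hg => ?_, fun i hf hg => ?_⟩
  · by_contra! h_lt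
    obtain ⟨c, hgc, hcf, h_notMem_f, h_notMem_g⟩ := exists_between_notMem h_lt f.roots g.roots
    have h_above := (lt_getElem_iff_lt_countP (descRoots_pairwise f) c hf).mp hcf
    have h_below := mt (lt_getElem_iff_lt_countP (descRoots_pairwise g) c hg).mpr hgc.not_gt
    have := (h c h_notMem_f h_notMem_g).1
    omega
  · by_contra! h_lt
    obtain ⟨c, hfc, hcg, h_notMem_f, h_notMem_g⟩ := exists_between_notMem h_lt f.roots g.roots
    have h_above := (lt_getElem_iff_lt_countP (descRoots_pairwise g) c hg).mp hcg
    have h_below := mt (lt_getElem_iff_lt_countP (descRoots_pairwise f) c hf).mpr hfc.not_gt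
    have := (h c h_notMem_f h_notMem_g).2
    omega

lemma realRooted_of_aeval_ne_zero {f : ℝ[X]} (h : ∀ z : ℂ, 0 < z.im → aeval z f ≠ 0) :
    RealRooted f := by
  intro z hz
  have hz_root : aeval z f = 0 := by simpa using (mem_roots'.mp hz).2
  have hz_conj : aeval (starRingEnd ℂ z) f = 0 := by rw [aeval_conj, hz_root, map_zero]
  refine le_antisymm (not_lt.mp fun h_pos => h z h_pos hz_root)
    (not_lt.mp fun h_neg => h _ ?_ hz_conj)
  simpa using h_neg

lemma RealRooted.splits {f : ℝ[X]} (h : RealRooted f) : f.Splits :=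
  Splits.of_splits_map (algebraMap ℝ ℂ) (IsAlgClosed.splits _) fun z hz =>
    ⟨z.re, Complex.ext rfl (h z hz).symm⟩

lemma aeval_eq_prod_roots_of_monic {f : ℝ[X]} (hf : f.Monic) (h : f.Splits) (z : ℂ) :
    aeval z f = (f.roots.map fun α : ℝ => z - α).prod := by
  conv_lhs => rw [h.eq_prod_roots_of_monic hf]
  simp [map_multiset_prod, Multiset.map_map]

lemma interlaces_of_im_pos {f g : ℝ[X]} (hf : f.Monic) (hg : g.Monic)
    (h_deg : g.natDegree = f.natDegree + 1)
    (h : ∀ z : ℂ, 0 < z.im → 0 < (aeval z g * starRingEnd ℂ (aeval z f)).im) :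
    Interlaces f g := by
  have hf_real : RealRooted f := realRooted_of_aeval_ne_zero fun z hz h_root => by
    simpa [h_root] using h z hz
  have hg_real : RealRooted g := realRooted_of_aeval_ne_zero fun z hz h_root => by
    simpa [h_root] using h z hz
  refine ⟨hf_real, hg_real, Or.inr (Or.inr (Or.inr (interlacesAux_of_countP h_deg fun c => ?_)))⟩
  refine countP_lt_interlaces (fun z hz => ?_) ?_
  · rw [← aeval_eq_prod_roots_of_monic hf hf_real.splits,
      ← aeval_eq_prod_roots_of_monic hg hg_real.splits]
    exact h z hz
  · rw [← hf_real.splits.natDegree_eq_card_roots, ← hg_real.splits.natDegree_eq_card_roots, h_deg]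

end Interlacing

section AlternatingSum

variable {ι R : Type*} [DecidableEq ι] [CommRing R]

/-- The Möbius inversion `S ↦ ∑ T ⊆ S, (-1) ^ |S \ T| * α T`, which turns a flag `f`-vector into
a flag `h`-vector. -/
def altSum (α : Finset ι → R) (S : Finset ι) : R :=
  ∑ T ∈ S.powerset, (-1) ^ (S \ T).card * α T

lemma altSum_congr {α α' : Finset ι → R} {S : Finset ι} (h : ∀ T ⊆ S, α T = α' T) :
    altSum α S = altSum α' S :=
  Finset.sum_congr rfl fun T hT => by rw [h T (Finset.mem_powerset.mp hT)]

lemma altSum_sum_mul {κ : Type*} (s : Finset κ) (w : κ → R) (α : κ → Finset ι → R)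
    (S : Finset ι) :
    altSum (fun T => ∑ k ∈ s, w k * α k T) S = ∑ k ∈ s, w k * altSum (α k) S := by
  simp only [altSum, Finset.mul_sum]
  rw [Finset.sum_comm]
  exact Finset.sum_congr rfl fun k _ => Finset.sum_congr rfl fun T _ => mul_left_comm _ _ _

lemma altSum_sum {κ : Type*} (s : Finset κ) (α : κ → Finset ι → R) (S : Finset ι) :
    altSum (fun T => ∑ k ∈ s, α k T) S = ∑ k ∈ s, altSum (α k) S := by
  simpa using altSum_sum_mul s 1 α S

lemma altSum_insert (α : Finset ι → R) {a : ι} {S : Finset ι} (ha : a ∉ S) :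
    altSum α (insert a S) = altSum (fun T => α (insert a T)) S - altSum α S := by
  rw [altSum, Finset.sum_powerset_insert ha, add_comm, sub_eq_add_neg, altSum, altSum,
    ← Finset.sum_neg_distrib]
  congr 1
  · exact Finset.sum_congr rfl fun T _ => by
      rw [Finset.insert_sdiff_insert, Finset.sdiff_insert_of_notMem ha]
  · refine Finset.sum_congr rfl fun T hT => ?_
    have haT : a ∉ T := fun h => ha (Finset.mem_powerset.mp hT h)
    rw [Finset.insert_sdiff_of_notMem _ haT,
      Finset.card_insert_of_notMem fun h => ha (Finset.mem_sdiff.mp h).1]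
    ring

end AlternatingSum

section BasisFlagVectors

/-- The flag `f`-number at `T ⊆ {1, …, n}` of a virtual simplicial poset of rank `n` whose
`h`-vector is the `k`-th unit vector. Deleting the facets of rank `n + 1` replaces this `h`-vector
by the sum of the unit vectors `k, …, n`, while below each facet lies the boundary of a simplex,
whose `h`-vector is `(1, …, 1)`. -/
def basisFlagF : ℕ → ℕ → Finset ℕ → ℤ
  | 0, k, _ => if k = 0 then 1 else 0
  | n + 1, k, T =>
    if n + 1 ∈ T then ∑ j ∈ Finset.range (n + 1), basisFlagF n j (T.erase (n + 1))
    else ∑ j ∈ Finset.Ico k (n + 1), basisFlagF n j T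

/-- The flag `h`-number at `S ⊆ {1, …, n}` attached to the flag `f`-numbers `basisFlagF n k`. -/
def basisFlagH (n k : ℕ) (S : Finset ℕ) : ℤ :=
  altSum (basisFlagF n k) S

variable {n m k : ℕ} {S T : Finset ℕ}

lemma basisFlagF_succ (hT : n + 1 ∉ T) :
    basisFlagF (n + 1) k T = ∑ j ∈ Finset.Ico k (n + 1), basisFlagF n j T := by
  rw [basisFlagF, if_neg hT]

lemma basisFlagF_succ_insert (hT : n + 1 ∉ T) :
    basisFlagF (n + 1) k (insert (n + 1) T) = ∑ j ∈ Finset.range (n + 1), basisFlagF n j T := by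
  rw [basisFlagF, if_pos (Finset.mem_insert_self _ _), Finset.erase_insert hT]

lemma basisFlagF_empty (n k : ℕ) : basisFlagF n k ∅ = if k = 0 then 1 else 0 := by
  induction n generalizing k with
  | zero => rfl
  | succ n ih =>
    rw [basisFlagF_succ (Finset.notMem_empty _)]
    simp [ih]

lemma sum_Ico_choose_sub (n k d : ℕ) :
    ∑ j ∈ Finset.Ico k (n + 1), (n - j).choose d = (n + 1 - k).choose (d + 1) := by
  rw [Finset.sum_Ico_reflect (fun i => i.choose d) k le_rfl, Nat.sub_self, ← Finset.range_eq_Ico]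
  induction n + 1 - k with
  | zero => simp
  | succ m ih => rw [Finset.sum_range_succ, ih, Nat.choose_succ_succ', add_comm]

lemma basisFlagF_insert_max (hm : 0 < m) (hmn : m ≤ n) (hT : ∀ x ∈ T, x < m) :
    basisFlagF n k (insert m T) = (n - k).choose (n - m) * basisFlagF m 0 T := by
  induction n, hmn using Nat.le_induction generalizing k with
  | base =>
    obtain ⟨p, rfl⟩ := Nat.exists_eq_succ_of_ne_zero hm.ne'
    have hpT : p + 1 ∉ T := fun h => (hT _ h).false
    rw [basisFlagF_succ_insert hpT, basisFlagF_succ hpT, Finset.range_eq_Ico]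
    simp
  | succ n hmn ih =>
    have h_notMem : n + 1 ∉ insert m T := by
      intro h
      rcases Finset.mem_insert.mp h with rfl | h
      · omega
      · have := hT _ h
        omega
    rw [basisFlagF_succ h_notMem]
    simp only [ih]
    rw [← Finset.sum_mul, ← Nat.cast_sum, sum_Ico_choose_sub, Nat.succ_sub hmn]

lemma basisFlagH_succ (hS : n + 1 ∉ S) :
    basisFlagH (n + 1) k S = ∑ j ∈ Finset.Ico k (n + 1), basisFlagH n j S := by
  simp only [basisFlagH, ← altSum_sum]
  exact altSum_congr fun T hT => basisFlagF_succ fun h => hS (hT h)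

lemma basisFlagH_succ_insert (hk : k ≤ n + 1) (hS : n + 1 ∉ S) :
    basisFlagH (n + 1) k (insert (n + 1) S) = ∑ j ∈ Finset.range k, basisFlagH n j S := by
  have h_insert : altSum (fun T => basisFlagF (n + 1) k (insert (n + 1) T)) S =
      ∑ j ∈ Finset.range (n + 1), basisFlagH n j S := by
    simp only [basisFlagH, ← altSum_sum]
    exact altSum_congr fun T hT => basisFlagF_succ_insert fun h => hS (hT h)
  rw [basisFlagH, altSum_insert _ hS, h_insert, ← basisFlagH, basisFlagH_succ hS, sub_eq_iff_eq_add,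
    Finset.sum_range_add_sum_Ico _ hk]

end BasisFlagVectors

section IsolatedSum

variable {R : Type*} [CommSemiring R] {N : ℕ}

/-- The generating function `∑ β S * t ^ |S|` over the isolated subsets `S` of `{1, …, N - 1}`. -/
def isolatedSum (β : Finset ℕ → R) (N : ℕ) (t : R) : R :=
  ∑ S ∈ (Finset.Ico 1 N).powerset.filter IsolatedSet, β S * t ^ S.card

lemma isolatedSum_congr {β β' : Finset ℕ → R} (h : ∀ S ⊆ Finset.Ico 1 N, β S = β' S) (t : R) :
    isolatedSum β N t = isolatedSum β' N t :=
  Finset.sum_congr rfl fun S hS => by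
    rw [h S (Finset.mem_powerset.mp (Finset.mem_filter.mp hS).1)]

lemma isolatedSum_sum_mul {κ : Type*} (s : Finset κ) (w : κ → R) (β : κ → Finset ℕ → R) (N : ℕ)
    (t : R) :
    isolatedSum (fun S => ∑ k ∈ s, w k * β k S) N t = ∑ k ∈ s, w k * isolatedSum (β k) N t := by
  simp only [isolatedSum, Finset.mul_sum, Finset.sum_mul]
  rw [Finset.sum_comm]
  exact Finset.sum_congr rfl fun k _ => Finset.sum_congr rfl fun S _ => mul_assoc _ _ _

lemma isolatedSum_sum {κ : Type*} (s : Finset κ) (β : κ → Finset ℕ → R) (N : ℕ) (t : R) :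
    isolatedSum (fun S => ∑ k ∈ s, β k S) N t = ∑ k ∈ s, isolatedSum (β k) N t := by
  simpa using isolatedSum_sum_mul s 1 β N t

lemma isolatedSet_insert_iff {S : Finset ℕ} (hS : S ⊆ Finset.Ico 1 (N + 1)) :
    IsolatedSet (insert (N + 1) S) ↔ S ⊆ Finset.Ico 1 N ∧ IsolatedSet S := by
  have h_lt : ∀ i ∈ S, i < N + 1 := fun i hi => (Finset.mem_Ico.mp (hS hi)).2
  constructor
  · intro h
    refine ⟨fun i hi => ?_, fun i hi hi' => h i (Finset.mem_insert_of_mem hi)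
      (Finset.mem_insert_of_mem hi')⟩
    have h_ne : i ≠ N := by
      rintro rfl
      exact h i (Finset.mem_insert_of_mem hi) (Finset.mem_insert_self _ _)
    have := Finset.mem_Ico.mp (hS hi)
    exact Finset.mem_Ico.mpr (by omega)
  · rintro ⟨hSN, h⟩ i hi hi'
    rcases Finset.mem_insert.mp hi with rfl | hi <;> rcases Finset.mem_insert.mp hi' with h_eq | hi'
    · omega
    · have := h_lt _ hi'
      omega
    · have := Finset.mem_Ico.mp (hSN hi)
      omega
    · exact h i hi hi'

lemma isolatedSum_add_two (β : Finset ℕ → R) (N : ℕ) (t : R) :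
    isolatedSum β (N + 2) t =
      isolatedSum β (N + 1) t + t * isolatedSum (fun S => β (insert (N + 1) S)) N t := by
  have h_notMem : N + 1 ∉ Finset.Ico 1 (N + 1) := by simp
  have h_filter :
      (Finset.Ico 1 (N + 1)).powerset.filter (fun S => IsolatedSet (insert (N + 1) S)) =
        (Finset.Ico 1 N).powerset.filter IsolatedSet := by
    ext S
    simp only [Finset.mem_filter, Finset.mem_powerset]
    refine ⟨fun h => (isolatedSet_insert_iff h.1).mp h.2, fun h => ?_⟩
    have hS : S ⊆ Finset.Ico 1 (N + 1) := h.1.trans (Finset.Ico_subset_Ico_right N.le_succ)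
    exact ⟨hS, (isolatedSet_insert_iff hS).mpr h⟩
  have h_Ico : Finset.Ico 1 (N + 2) = insert (N + 1) (Finset.Ico 1 (N + 1)) :=
    (Finset.insert_Ico_right_eq_Ico_add_one (by omega)).symm
  rw [isolatedSum, h_Ico, Finset.sum_filter, Finset.sum_powerset_insert h_notMem,
    ← Finset.sum_filter, ← Finset.sum_filter, h_filter, isolatedSum, isolatedSum, Finset.mul_sum]
  refine congrArg _ (Finset.sum_congr rfl fun S hS => ?_)
  have hS' : N + 1 ∉ S := fun h => by
    simpa using Finset.mem_powerset.mp (Finset.mem_filter.mp hS).1 h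
  rw [Finset.card_insert_of_notMem hS', pow_succ]
  ring

end IsolatedSum

section IsolatedRows

/-- The generating function of the numbers `basisFlagH n k S` over the isolated
`S ⊆ {1, …, N - 1}`. -/
noncomputable def isolatedRow (t : ℂ) (N n k : ℕ) : ℂ :=
  isolatedSum (fun S => (basisFlagH n k S : ℂ)) N t

lemma isolatedRow_succ (t : ℂ) (n k : ℕ) :
    isolatedRow t (n + 1) (n + 1) k = ∑ j ∈ Finset.Ico k (n + 1), isolatedRow t (n + 1) n j := by
  simp only [isolatedRow, ← isolatedSum_sum]
  refine isolatedSum_congr (fun S hS => ?_) t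
  rw [basisFlagH_succ fun h => by simpa using hS h, Int.cast_sum]

lemma isolatedRow_add_two (t : ℂ) {n k : ℕ} (hk : k ≤ n + 1) :
    isolatedRow t (n + 2) (n + 1) k =
      isolatedRow t (n + 1) (n + 1) k + t * ∑ j ∈ Finset.range k, isolatedRow t n n j := by
  simp only [isolatedRow, ← isolatedSum_sum]
  rw [isolatedSum_add_two]
  congr 2
  refine isolatedSum_congr (fun S hS => ?_) t
  rw [basisFlagH_succ_insert hk fun h => by simpa using hS h, Int.cast_sum]

lemma interlacingRow_isolatedRow {t : ℂ} (ht : t ∈ Complex.slitPlane) (n : ℕ) :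
    InterlacingRow t n (isolatedRow t n n) (isolatedRow t (n + 1) n) := by
  induction n with
  | zero =>
    have h_one : isolatedRow t 0 0 0 = 1 := by
      simp [isolatedRow, isolatedSum, basisFlagH, altSum, basisFlagF, Finset.filter_singleton,
        IsolatedSet]
    exact InterlacingRow.zero (h_one ▸ one_ne_zero) (by simp [isolatedRow, isolatedSum])
  | succ n ih =>
    exact ih.succ ht (isolatedRow_succ t n) fun k hk => by
      rw [isolatedRow_add_two t hk, Finset.range_eq_Ico]

end IsolatedRows

section RankFunction

variable {P : Type*} [PartialOrder P] [OrderBot P] {rk : P → ℕ}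

lemma IsRankFunction.strictMono [Finite P] (hrk : IsRankFunction rk) : StrictMono rk := by
  classical
  have := Fintype.ofFinite P
  let := Fintype.toLocallyFiniteOrder (α := P)
  exact (strictMono_iff_forall_covBy rk).mpr fun a b hab => by
    rw [hrk.2 a b hab]
    exact Nat.lt_succ_self _

lemma IsRankFunction.eq_zero_iff [Finite P] (hrk : IsRankFunction rk) {x : P} :
    rk x = 0 ↔ x = ⊥ := by
  refine ⟨fun h => ?_, fun h => h ▸ hrk.1⟩
  by_contra h_ne
  have := hrk.strictMono (bot_lt_iff_ne_bot.mpr h_ne)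
  omega

variable {n : ℕ} {m : P}

lemma IsRankFunction.rk_orderIso_symm (hrk : IsRankFunction rk)
    (e : Set.Icc (⊥ : P) m ≃o Finset (Fin n)) (s : Finset (Fin n)) :
    rk (e.symm s) = s.card := by
  induction s using Finset.induction_on with
  | empty =>
    have h_bot : e.symm ∅ = ⟨⊥, le_rfl, bot_le⟩ :=
      le_antisymm (e.symm_apply_le.mpr (Finset.empty_subset _)) bot_le
    rw [h_bot, hrk.1, Finset.card_empty]
  | insert a s ha ih =>
    have h_covBy : e.symm s ⋖ e.symm (insert a s) :=
      (apply_covBy_apply_iff e.symm).mpr (Finset.covBy_insert ha)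
    have h_covBy' : (e.symm s : P) ⋖ e.symm (insert a s) :=
      ⟨h_covBy.1, fun z hz hz' =>
        h_covBy.2 (c := ⟨z, bot_le, hz'.le.trans (e.symm (insert a s)).2.2⟩) hz hz'⟩
    rw [hrk.2 _ _ h_covBy', ih, Finset.card_insert_of_notMem ha]

lemma IsRankFunction.card_orderIso (hrk : IsRankFunction rk)
    (e : Set.Icc (⊥ : P) m ≃o Finset (Fin n)) (y : Set.Icc (⊥ : P) m) :
    (e y).card = rk y := by
  rw [← hrk.rk_orderIso_symm e, e.symm_apply_apply]

lemma SimplicialOfRank.exists_orderIso [Finite P] (hP : SimplicialOfRank P n) (x : P) :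
    ∃ m, x ≤ m ∧ Nonempty (Set.Icc (⊥ : P) m ≃o Finset (Fin n)) := by
  obtain ⟨m, hxm, hm⟩ := Finite.exists_le_maximal (p := fun _ : P => True) (a := x) trivial
  exact ⟨m, hxm, hP m fun y hy => hm.2 trivial hy⟩

lemma card_filter_le_rk_eq [Fintype P] [DecidableLE P] (hrk : IsRankFunction rk)
    (hP : SimplicialOfRank P n) (x : P) (j : ℕ) :
    ({y | y ≤ x ∧ rk y = j} : Finset P).card = (rk x).choose j := by
  obtain ⟨m, hxm, ⟨e⟩⟩ := hP.exists_orderIso x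
  rw [← hrk.card_orderIso e ⟨x, bot_le, hxm⟩, ← Finset.card_powersetCard]
  symm
  refine Finset.card_bij (fun s _ => (e.symm s : P)) ?_ ?_ ?_
  · intro s hs
    obtain ⟨hsx, h_card⟩ := Finset.mem_powersetCard.mp hs
    have h_le : e.symm s ≤ ⟨x, bot_le, hxm⟩ := e.symm_apply_le.mpr hsx
    exact Finset.mem_filter.mpr ⟨Finset.mem_univ _, h_le, by rw [hrk.rk_orderIso_symm, h_card]⟩
  · exact fun s _ s' _ h => e.symm.injective (Subtype.ext h)
  · intro y hy
    obtain ⟨hyx, h_rk⟩ : y ≤ x ∧ rk y = j := by simpa using hy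
    refine ⟨e ⟨y, bot_le, hyx.trans hxm⟩, Finset.mem_powersetCard.mpr ⟨?_, ?_⟩, by simp⟩
    · exact e.le_iff_le.mpr hyx
    · rw [hrk.card_orderIso, h_rk]

end RankFunction

section ChainCount

open Classical in
/-- The chains contained in `Q` on which `rk` takes exactly the values in `T`. -/
noncomputable def chainsWithRanks {P : Type*} [Fintype P] [PartialOrder P] (rk : P → ℕ)
    (Q : Set P) (T : Finset ℕ) : Finset (Finset P) :=
  {c | IsChain (· ≤ ·) (c : Set P) ∧ (c : Set P) ⊆ Q ∧ c.image rk = T}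

variable {P : Type*} [Fintype P] [PartialOrder P] {rk : P → ℕ} {Q : Set P} {T : Finset ℕ} {m : ℕ}

lemma mem_chainsWithRanks {c : Finset P} : c ∈ chainsWithRanks rk Q T ↔
    IsChain (· ≤ ·) (c : Set P) ∧ (c : Set P) ⊆ Q ∧ c.image rk = T := by
  simp [chainsWithRanks]

lemma rk_mem_of_mem_chainsWithRanks {c : Finset P} (hc : c ∈ chainsWithRanks rk Q T) {y : P}
    (hy : y ∈ c) : rk y ∈ T :=
  (mem_chainsWithRanks.mp hc).2.2 ▸ Finset.mem_image_of_mem rk hy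

lemma chainsWithRanks_empty (rk : P → ℕ) (Q : Set P) : chainsWithRanks rk Q ∅ = {∅} := by
  ext c
  rw [mem_chainsWithRanks, Finset.image_eq_empty, Finset.mem_singleton]
  exact ⟨fun h => h.2.2, fun h => by simp [h]⟩

lemma insert_mem_chainsWithRanks [DecidableEq P] (hQ : IsLowerSet Q) {y : P} (hy : y ∈ Q)
    {c : Finset P} (hc : c ∈ chainsWithRanks rk (Set.Iio y) T) :
    insert y c ∈ chainsWithRanks rk Q (insert (rk y) T) := by
  obtain ⟨h_chain, h_sub, h_ranks⟩ := mem_chainsWithRanks.mp hc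
  refine mem_chainsWithRanks.mpr ⟨?_, ?_, by rw [Finset.image_insert, h_ranks]⟩
  · rw [Finset.coe_insert]
    exact h_chain.insert fun z hz _ => Or.inr (h_sub hz).le
  · rw [Finset.coe_insert]
    exact Set.insert_subset hy fun z hz => hQ (h_sub hz).le hy

lemma erase_mem_chainsWithRanks [DecidableEq P] (hrk : StrictMono rk) {y : P}
    (hT : ∀ t ∈ T, t < rk y) {c : Finset P}
    (hc : c ∈ chainsWithRanks rk Q (insert (rk y) T)) (hy : y ∈ c) :
    c.erase y ∈ chainsWithRanks rk (Set.Iio y) T := by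
  obtain ⟨h_chain, -, h_ranks⟩ := mem_chainsWithRanks.mp hc
  have h_le : ∀ z ∈ c, rk z ≤ rk y := fun z hz => by
    rcases Finset.mem_insert.mp (rk_mem_of_mem_chainsWithRanks hc hz) with h | h
    · exact h.le
    · exact (hT _ h).le
  have h_lt : ∀ z ∈ c.erase y, z < y := fun z hz => by
    obtain ⟨h_ne, hz⟩ := Finset.mem_erase.mp hz
    exact (h_chain.total hz hy).elim (lt_of_le_of_ne · h_ne) fun h =>
      absurd (hrk (lt_of_le_of_ne h h_ne.symm)) (h_le z hz).not_gt
  refine mem_chainsWithRanks.mpr ⟨h_chain.mono (Finset.coe_subset.mpr (Finset.erase_subset y c)),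
    fun z hz => h_lt z hz, ?_⟩
  have h_rk : rk y ∉ (c.erase y).image rk := fun h => by
    obtain ⟨z, hz, h_eq⟩ := Finset.mem_image.mp h
    exact (hrk (h_lt z hz)).ne h_eq
  rw [← Finset.erase_insert h_rk, ← Finset.image_insert, Finset.insert_erase hy, h_ranks,
    Finset.erase_insert fun h => (hT _ h).false]

lemma card_chainsWithRanks_insert [DecidablePred (· ∈ Q)] (hrk : StrictMono rk) (hQ : IsLowerSet Q)
    (hT : ∀ t ∈ T, t < m) :
    (chainsWithRanks rk Q (insert m T)).card =
      ∑ y with y ∈ Q ∧ rk y = m, (chainsWithRanks rk (Set.Iio y) T).card := by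
  classical
  rw [← Finset.card_sigma]
  symm
  refine Finset.card_bij (fun p _ => insert p.1 p.2) ?_ ?_ ?_
  · rintro ⟨y, c⟩ h
    obtain ⟨⟨hyQ, rfl⟩, hc⟩ : (y ∈ Q ∧ rk y = m) ∧ c ∈ chainsWithRanks rk (Set.Iio y) T := by
      simpa using h
    exact insert_mem_chainsWithRanks hQ hyQ hc
  · rintro ⟨y, c⟩ h ⟨y', c'⟩ h' (h_eq : insert y c = insert y' c')
    obtain ⟨⟨-, rfl⟩, hc⟩ : (y ∈ Q ∧ rk y = m) ∧ c ∈ chainsWithRanks rk (Set.Iio y) T := by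
      simpa using h
    obtain ⟨⟨-, -⟩, hc'⟩ : (y' ∈ Q ∧ rk y' = rk y) ∧ c' ∈ chainsWithRanks rk (Set.Iio y') T := by
      simpa using h'
    obtain rfl : y = y' := by
      have h_or := Finset.mem_insert.mp (h_eq ▸ Finset.mem_insert_self y c)
      exact h_or.resolve_right fun h_mem => (hT _ (rk_mem_of_mem_chainsWithRanks hc' h_mem)).false
    have h_notMem : ∀ d ∈ chainsWithRanks rk (Set.Iio y) T, y ∉ d := fun d hd h_mem =>
      (hT _ (rk_mem_of_mem_chainsWithRanks hd h_mem)).false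
    rw [← Finset.erase_insert (h_notMem c hc), h_eq, Finset.erase_insert (h_notMem c' hc')]
  · intro c hc
    obtain ⟨y, hy, rfl⟩ : ∃ y ∈ c, rk y = m := by
      rw [← Finset.mem_image, (mem_chainsWithRanks.mp hc).2.2]
      exact Finset.mem_insert_self _ _
    exact ⟨⟨y, c.erase y⟩, by
      simpa [(mem_chainsWithRanks.mp hc).2.1 hy] using erase_mem_chainsWithRanks hrk hT hc hy,
      Finset.insert_erase hy⟩

variable [OrderBot P] {n : ℕ}

lemma card_filter_lt_rk_eq {x : P} [DecidablePred (· ∈ Set.Iio x)] (hrk : IsRankFunction rk)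
    (hP : SimplicialOfRank P n) (hm : m < rk x) :
    ({y | y ∈ Set.Iio x ∧ rk y = m} : Finset P).card = (rk x).choose m := by
  classical
  rw [← card_filter_le_rk_eq hrk hP]
  refine congrArg Finset.card (Finset.filter_congr fun y _ => and_congr_left fun h => ?_)
  exact ⟨le_of_lt, fun h_le => lt_of_le_of_ne h_le fun h_eq => hm.ne (h_eq ▸ h.symm)⟩

lemma card_chainsWithRanks_insert_eq_mul [DecidablePred (· ∈ Q)] (hrk : IsRankFunction rk)
    (hP : SimplicialOfRank P n) (hQ : IsLowerSet Q) (hT : T ⊆ Finset.Ico 1 m) :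
    ((chainsWithRanks rk Q (insert m T)).card : ℤ) =
      ({y | y ∈ Q ∧ rk y = m} : Finset P).card * basisFlagF m 0 T := by
  induction T using Finset.induction_on_max generalizing m Q with
  | empty =>
    rw [card_chainsWithRanks_insert hrk.strictMono hQ fun t ht => absurd ht (Finset.notMem_empty t)]
    simp [chainsWithRanks_empty, basisFlagF_empty]
  | insert l T h_max ih =>
    classical
    obtain ⟨hl, hlm⟩ := Finset.mem_Ico.mp (hT (Finset.mem_insert_self l T))
    have hTl : T ⊆ Finset.Ico 1 l := fun t ht => Finset.mem_Ico.mpr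
      ⟨(Finset.mem_Ico.mp (hT (Finset.mem_insert_of_mem ht))).1, h_max t ht⟩
    have h_below : ∀ y, rk y = m →
        ((chainsWithRanks rk (Set.Iio y) (insert l T)).card : ℤ) = basisFlagF m 0 (insert l T) := by
      rintro y rfl
      rw [ih (isLowerSet_Iio y) hTl, card_filter_lt_rk_eq hrk hP hlm,
        basisFlagF_insert_max hl hlm.le h_max, Nat.sub_zero, Nat.choose_symm hlm.le]
    rw [card_chainsWithRanks_insert hrk.strictMono hQ fun t ht => (Finset.mem_Ico.mp (hT ht)).2,
      Nat.cast_sum, Finset.sum_congr rfl fun y hy => h_below y (Finset.mem_filter.mp hy).2.2,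
      Finset.sum_const, nsmul_eq_mul]

end ChainCount

section HVector

lemma reflect_X_pow_mul_one_sub_X_pow {R : Type*} [CommRing R] {i n : ℕ} (hi : i ≤ n) :
    reflect n (X ^ i * (1 - X) ^ (n - i) : R[X]) = (X - 1) ^ (n - i) := by
  have h_natDegree (d : ℕ) : ((1 - X : R[X]) ^ d).natDegree ≤ d := by compute_degree
  have h_reflect (d : ℕ) : reflect d ((1 - X : R[X]) ^ d) = (X - 1) ^ d := by
    induction d with
    | zero => simp
    | succ d ih =>
      rw [pow_succ, reflect_mul _ _ (h_natDegree d) (by compute_degree), ih, reflect_sub,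
        reflect_one, reflect_one_X, pow_one, pow_succ]
  obtain ⟨d, rfl⟩ := Nat.exists_eq_add_of_le hi
  rw [Nat.add_sub_cancel_left, reflect_mul _ _ (natDegree_X_pow_le i) (h_natDegree d), h_reflect,
    reflect_monomial, revAt_le le_rfl, Nat.sub_self, pow_zero, one_mul]

lemma reflect_sum {R ι : Type*} [Semiring R] (n : ℕ) (s : Finset ι) (p : ι → R[X]) :
    reflect n (∑ i ∈ s, p i) = ∑ i ∈ s, reflect n (p i) := by
  ext
  simp [coeff_reflect, finsetSum_coeff]

lemma coeff_taylor_one_reflect {R : Type*} [CommSemiring R] {p : R[X]} {n : ℕ}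
    (hp : p.natDegree ≤ n) (d : ℕ) :
    (taylor 1 (reflect n p)).coeff d =
      ∑ k ∈ Finset.range (n + 1), p.coeff k * ((n - k).choose d : ℕ) := by
  have h_natDegree : (reflect n p).natDegree < n + 1 :=
    Nat.lt_succ_of_le (natDegree_reflect_le.trans (max_le le_rfl hp))
  rw [taylor_coeff, hasseDeriv_apply, sum_over_range' _ (by simp) _ h_natDegree, eval_finsetSum,
    ← Finset.sum_range_reflect]
  refine Finset.sum_congr rfl fun k hk => ?_
  have hk : k ≤ n := Finset.mem_range_succ_iff.mp hk
  simp only [eval_monomial, one_pow, coeff_reflect, Nat.add_sub_cancel,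
    revAt_le (Nat.sub_le n k), Nat.sub_sub_self hk, mul_comm, one_mul]

variable {P : Type*} [Fintype P] {n m : ℕ}

lemma natDegree_hPoly_le (rk : P → ℕ) (n : ℕ) : (hPoly rk n).natDegree ≤ n := by
  refine natDegree_sum_le_of_forall_le _ _ fun i hi => ?_
  have hi : i ≤ n := Finset.mem_range_succ_iff.mp hi
  compute_degree
  omega

-- Reversing the coefficients and then shifting by one turns `x ^ i * (1 - x) ^ (n - i)` into the
-- monomial `x ^ (n - i)`, hence inverts the passage from the `f`-vector to the `h`-vector.
lemma fvec_eq_sum_hvec (rk : P → ℕ) (hm : m ≤ n) :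
    (fvec rk m : ℤ) =
      ∑ k ∈ Finset.range (n + 1), hvec rk n k * ((n - k).choose (n - m) : ℕ) := by
  have h_summand : ∀ i ∈ Finset.range (n + 1),
      reflect n (C (fvec rk i : ℤ) * X ^ i * (1 - X) ^ (n - i)) =
        C (fvec rk i : ℤ) * (X - 1) ^ (n - i) := fun i hi => by
    rw [mul_assoc, reflect_C_mul,
      reflect_X_pow_mul_one_sub_X_pow (Finset.mem_range_succ_iff.mp hi)]
  have h_taylor : taylor 1 (reflect n (hPoly rk n)) =
      ∑ i ∈ Finset.range (n + 1), C (fvec rk i : ℤ) * X ^ (n - i) := by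
    rw [hPoly, reflect_sum, Finset.sum_congr rfl h_summand]
    simp only [map_sum, taylor_mul, taylor_pow, map_sub, taylor_C, taylor_X, taylor_one, C_1,
      add_sub_cancel_right]
  simp only [hvec]
  rw [← coeff_taylor_one_reflect (natDegree_hPoly_le rk n), h_taylor, finsetSum_coeff,
    Finset.sum_eq_single_of_mem m (Finset.mem_range_succ_iff.mpr hm)]
  · simp
  · intro i hi h_ne
    have := Finset.mem_range_succ_iff.mp hi
    rw [coeff_C_mul_X_pow, if_neg (by omega)]

variable [PartialOrder P] [OrderBot P] {rk : P → ℕ} {S T : Finset ℕ}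

lemma hvec_zero (hrk : IsRankFunction rk) (n : ℕ) : hvec rk n 0 = 1 := by
  have h_one : fvec rk 0 = 1 := by
    rw [fvec, Finset.card_eq_one]
    exact ⟨⊥, by ext x; simp [hrk.eq_zero_iff]⟩
  have h_eval : (hPoly rk n).eval 0 = 1 := by
    rw [hPoly, eval_finsetSum, Finset.sum_eq_single_of_mem 0 (by simp)]
    · simp [h_one]
    · intro i _ hi
      simp [hi]
  rw [hvec, coeff_zero_eq_eval_zero, h_eval]

lemma flagF_eq_card_chainsWithRanks (hrk : rk ⊥ = 0) (hT : 0 ∉ T) :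
    flagF rk T = (chainsWithRanks rk Set.univ T).card := by
  refine Nat.subtype_card _ fun c => ?_
  rw [mem_chainsWithRanks]
  refine and_congr_right fun _ => and_congr_left fun h => iff_of_true (Set.subset_univ _) ?_
  exact fun h_bot => hT (h ▸ hrk ▸ Finset.mem_image_of_mem rk h_bot)

lemma flagF_eq_sum_hvec (hrk : IsRankFunction rk) (hP : SimplicialOfRank P n)
    (hT : T ⊆ Finset.Ico 1 (n + 1)) :
    (flagF rk T : ℤ) = ∑ k ∈ Finset.range (n + 1), hvec rk n k * basisFlagF n k T := by
  rw [flagF_eq_card_chainsWithRanks hrk.1 fun h => by simpa using hT h]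
  induction T using Finset.induction_on_max with
  | empty => simp [chainsWithRanks_empty, basisFlagF_empty, hvec_zero hrk]
  | insert m T h_max =>
    obtain ⟨hm, hmn⟩ := Finset.mem_Ico.mp (hT (Finset.mem_insert_self m T))
    have hTm : T ⊆ Finset.Ico 1 m := fun t ht => Finset.mem_Ico.mpr
      ⟨(Finset.mem_Ico.mp (hT (Finset.mem_insert_of_mem ht))).1, h_max t ht⟩
    simp only [basisFlagF_insert_max hm (Nat.le_of_lt_succ hmn) h_max, ← mul_assoc]
    rw [card_chainsWithRanks_insert_eq_mul hrk hP isLowerSet_univ hTm, ← Finset.sum_mul,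
      ← fvec_eq_sum_hvec rk (Nat.le_of_lt_succ hmn)]
    simp [fvec]

lemma flagH_eq_sum_hvec (hrk : IsRankFunction rk) (hP : SimplicialOfRank P n)
    (hS : S ⊆ Finset.Ico 1 (n + 1)) :
    flagH rk S = ∑ k ∈ Finset.range (n + 1), hvec rk n k * basisFlagH n k S := by
  simp only [basisFlagH, ← altSum_sum_mul]
  exact altSum_congr fun T hT => flagF_eq_sum_hvec hrk hP (hT.trans hS)

end HVector

section GammaPolynomial

lemma IsolatedSet.two_mul_card_le {N : ℕ} {S : Finset ℕ} (h : IsolatedSet S)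
    (hS : S ⊆ Finset.Ico 1 N) : 2 * S.card ≤ N := by
  have h_disj : Disjoint S (S.map (addRightEmbedding 1)) := by
    rw [Finset.disjoint_right]
    rintro _ hi'
    obtain ⟨i, hi, rfl⟩ := Finset.mem_map.mp hi'
    exact h i hi
  have h_sub : S.disjUnion _ h_disj ⊆ Finset.Ioc 0 N := fun i hi => by
    rcases Finset.mem_disjUnion.mp hi with hi | hi
    · have := Finset.mem_Ico.mp (hS hi)
      exact Finset.mem_Ioc.mpr (by omega)
    · obtain ⟨j, hj, rfl⟩ := Finset.mem_map.mp hi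
      have := Finset.mem_Ico.mp (hS hj)
      exact Finset.mem_Ioc.mpr ⟨Nat.succ_pos j, this.2⟩
  have h_card := Finset.card_le_card h_sub
  rw [Finset.card_disjUnion, Finset.card_map, Nat.card_Ioc] at h_card
  omega

/-- The polynomial `∑ β S * x ^ |S| * (1 + x) ^ (N - 2 * |S|)` over the isolated subsets `S` of
`{1, …, N - 1}`: the augmented Chow polynomial for `N = n + 1` and, after reversing the sets `S`,
the dual Chow polynomial for `N = n`. The truncated subtraction is harmless, since `2 * |S| ≤ N`
for such `S`. -/
noncomputable def gammaPoly (β : Finset ℕ → ℝ) (N : ℕ) : ℝ[X] :=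
  ∑ S ∈ (Finset.Ico 1 N).powerset.filter IsolatedSet,
    β S • (X ^ S.card * (1 + X) ^ (N - 2 * S.card))

variable {β : Finset ℕ → ℝ} {N : ℕ}

lemma natDegree_gammaPoly_le (β : Finset ℕ → ℝ) (N : ℕ) : (gammaPoly β N).natDegree ≤ N := by
  refine natDegree_sum_le_of_forall_le _ _ fun S hS => (natDegree_smul_le _ _).trans ?_
  obtain ⟨hS, h_isol⟩ := Finset.mem_filter.mp hS
  have := h_isol.two_mul_card_le (Finset.mem_powerset.mp hS)
  compute_degree
  omega

lemma coeff_gammaPoly_self (β : Finset ℕ → ℝ) (N : ℕ) : (gammaPoly β N).coeff N = β ∅ := by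
  rw [gammaPoly, finsetSum_coeff, Finset.sum_eq_single_of_mem ∅ (by simp [IsolatedSet])]
  · simp [coeff_one_add_X_pow]
  · intro S hS h_ne
    obtain ⟨hS, h_isol⟩ := Finset.mem_filter.mp hS
    have h_card := h_isol.two_mul_card_le (Finset.mem_powerset.mp hS)
    have h_pos := Finset.card_pos.mpr (Finset.nonempty_iff_ne_empty.mpr h_ne)
    rw [coeff_smul, coeff_X_pow_mul', if_pos (by omega), coeff_one_add_X_pow,
      Nat.choose_eq_zero_of_lt (by omega), Nat.cast_zero, smul_zero]

lemma monic_gammaPoly (h : β ∅ = 1) (N : ℕ) : (gammaPoly β N).Monic :=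
  monic_of_natDegree_le_of_coeff_eq_one N (natDegree_gammaPoly_le β N)
    ((coeff_gammaPoly_self β N).trans h)

lemma natDegree_gammaPoly (h : β ∅ ≠ 0) (N : ℕ) : (gammaPoly β N).natDegree = N :=
  natDegree_eq_of_le_of_coeff_ne_zero (natDegree_gammaPoly_le β N)
    (by rwa [coeff_gammaPoly_self])

lemma aeval_gammaPoly {z : ℂ} (hz : 1 + z ≠ 0) (β : Finset ℕ → ℝ) (N : ℕ) :
    aeval z (gammaPoly β N) =
      (1 + z) ^ N * isolatedSum (fun S => (β S : ℂ)) N (z / (1 + z) ^ 2) := by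
  rw [gammaPoly, isolatedSum, map_sum, Finset.mul_sum]
  refine Finset.sum_congr rfl fun S hS => ?_
  obtain ⟨hS, h_isol⟩ := Finset.mem_filter.mp hS
  obtain ⟨d, rfl⟩ := Nat.exists_eq_add_of_le (h_isol.two_mul_card_le (Finset.mem_powerset.mp hS))
  simp only [map_smul, map_mul, map_pow, map_add, map_one, aeval_X, Complex.real_smul,
    Nat.add_sub_cancel_left]
  rw [pow_add, pow_mul, div_pow]
  field_simp

end GammaPolynomial

section Reversal

variable {a b c d m : ℕ} {S : Finset ℕ}

lemma image_sub_subset_Ico (hS : S ⊆ Finset.Ico a b) (hc : c + b ≤ m + 1) (hd : m < d + a) :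
    S.image (m - ·) ⊆ Finset.Ico c d := by
  refine Finset.image_subset_iff.mpr fun s hs => ?_
  have := Finset.mem_Ico.mp (hS hs)
  exact Finset.mem_Ico.mpr (by omega)

lemma injOn_sub_of_subset_Iic (hS : S ⊆ Finset.Iic m) : Set.InjOn (m - ·) S := by
  intro s hs t ht h_eq
  have := Finset.mem_Iic.mp (hS hs)
  have := Finset.mem_Iic.mp (hS ht)
  dsimp only at h_eq
  omega

lemma image_sub_image_sub (hS : S ⊆ Finset.Iic m) : (S.image (m - ·)).image (m - ·) = S := by
  rw [Finset.image_image]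
  exact (Finset.image_congr fun s hs => Nat.sub_sub_self (Finset.mem_Iic.mp (hS hs))).trans
    Finset.image_id

lemma IsolatedSet.image_sub (h : IsolatedSet S) (hS : S ⊆ Finset.Iic m) :
    IsolatedSet (S.image (m - ·)) := by
  intro i hi hi'
  obtain ⟨s, hs, rfl⟩ := Finset.mem_image.mp hi
  obtain ⟨t, ht, h_eq⟩ := Finset.mem_image.mp hi'
  have := Finset.mem_Iic.mp (hS hs)
  have := Finset.mem_Iic.mp (hS ht)
  exact h t ht (by rwa [show t + 1 = s by omega])

end Reversal

section ChowPolynomial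

variable {P : Type*} [PartialOrder P] [OrderBot P]

lemma chowAugPoly_eq_gammaPoly (rk : P → ℕ) (n : ℕ) :
    chowAugPoly rk n = gammaPoly (fun S => (flagH rk S : ℝ)) (n + 1) := by
  rw [chowAugPoly, gammaPoly, Finset.Ico_add_one_right_eq_Icc]

lemma chowDualPoly_eq_gammaPoly (rk : P → ℕ) (n : ℕ) :
    chowDualPoly rk n = gammaPoly (fun S => (flagH rk S : ℝ)) n := by
  have h_left : ∀ S ⊆ Finset.Icc 2 n, S ⊆ Finset.Iic (n + 1) := fun S hS s hs =>
    Finset.mem_Iic.mpr ((Finset.mem_Icc.mp (hS hs)).2.trans n.le_succ)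
  have h_right : ∀ S ⊆ Finset.Ico 1 n, S ⊆ Finset.Iic (n + 1) := fun S hS s hs =>
    Finset.mem_Iic.mpr ((Finset.mem_Ico.mp (hS hs)).2.le.trans n.le_succ)
  refine Finset.sum_nbij' (·.image (n + 1 - ·)) (·.image (n + 1 - ·)) ?_ ?_ ?_ ?_ ?_ <;>
    simp only [Finset.mem_filter, Finset.mem_powerset] <;> rintro S ⟨hS, h_isol⟩
  · refine ⟨image_sub_subset_Ico (a := 2) (b := n + 1) ?_ (by omega) (by omega),
      h_isol.image_sub (h_left S hS)⟩
    rwa [Finset.Ico_add_one_right_eq_Icc]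
  · rw [← Finset.Ico_add_one_right_eq_Icc]
    exact ⟨image_sub_subset_Ico hS (by omega) (by omega), h_isol.image_sub (h_right S hS)⟩
  · exact image_sub_image_sub (h_left S hS)
  · exact image_sub_image_sub (h_right S hS)
  · rw [Finset.card_image_of_injOn (injOn_sub_of_subset_Iic (h_left S hS)), flagHDual]

lemma flagH_empty (rk : P → ℕ) : flagH rk ∅ = 1 := by
  have h_card : flagF rk ∅ = 1 := Nat.subtype_card {∅} fun c => by
    rw [Finset.mem_singleton, Finset.image_eq_empty]
    refine ⟨?_, fun h => h.2.2⟩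
    rintro rfl
    simp
  simp [flagH, h_card]

lemma aeval_gammaPoly_flagH [Fintype P] {rk : P → ℕ} {n N : ℕ} (hrk : IsRankFunction rk)
    (hP : SimplicialOfRank P n) (hN : N ≤ n + 1) {z : ℂ} (hz : 1 + z ≠ 0) :
    aeval z (gammaPoly (fun S => (flagH rk S : ℝ)) N) = (1 + z) ^ N *
      ∑ k ∈ Finset.range (n + 1),
        ((hvec rk n k : ℝ) : ℂ) * isolatedRow (z / (1 + z) ^ 2) N n k := by
  simp only [aeval_gammaPoly hz, isolatedRow, ← isolatedSum_sum_mul]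
  refine congrArg _ (isolatedSum_congr (fun S hS => ?_) _)
  rw [flagH_eq_sum_hvec hrk hP (hS.trans (Finset.Ico_subset_Ico_right hN))]
  push_cast
  rfl

end ChowPolynomial

theorem statement3 {P : Type*} [Fintype P] [PartialOrder P] [OrderBot P]
    (n : ℕ) (rk : P → ℕ)
    (hrk : IsRankFunction rk)
    (hsimp : SimplicialOfRank P n)
    (hpos : ∀ k, 0 ≤ hvec rk n k) :
    Interlaces (chowDualPoly rk n) (chowAugPoly rk n) := by
  have h_one : ((flagH rk ∅ : ℤ) : ℝ) = 1 := by rw [flagH_empty, Int.cast_one]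
  rw [chowDualPoly_eq_gammaPoly, chowAugPoly_eq_gammaPoly]
  refine interlaces_of_im_pos (monic_gammaPoly h_one _) (monic_gammaPoly h_one _) ?_ fun z hz => ?_
  · rw [natDegree_gammaPoly (h_one ▸ one_ne_zero), natDegree_gammaPoly (h_one ▸ one_ne_zero)]
  have hz1 : 1 + z ≠ 0 := one_add_ne_zero_of_im_pos hz
  have ht : z / (1 + z) ^ 2 ∈ Complex.slitPlane := div_one_add_sq_mem_slitPlane hz
  have h_row := interlacingRow_isolatedRow ht n
  have hw : ∀ k, (0 : ℝ) ≤ hvec rk n k := fun k => Int.cast_nonneg (hpos k)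
  have hw0 : (0 : ℝ) < hvec rk n 0 := by simp [hvec_zero hrk]
  rw [aeval_gammaPoly_flagH hrk hsimp n.le_succ hz1, aeval_gammaPoly_flagH hrk hsimp le_rfl hz1]
  exact (h_row.combination_a_b hw).im_pos hz (h_row.combination_a_ne_zero ht hw hw0)
    (h_row.combination_b_ne_zero ht hw hw0) n
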